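/- arXiv:math/9802083 — 2 statements merged into one kernel-verified Lean document; each statement's English description precedes it below -/
import Mathlib

section
/- For every integer n ≥ 1 and all real numbers q, q' > 1, the concrete quantum sphere C*-algebras A_n(q) and A_n(q') are isomorphic as unital C*-algebras (both being isomorphic to the C*-algebra of the subquotient groupoid 𝔉_n); in particular C(S_q^{2n+1}) is independent of q. -/
noncomputable section

/-- The Hilbert space `ℓ²(ℤ) ⊗ H_n = ℓ²(ℤ × ℕⁿ)`, where `H_n = ℓ²(ℕⁿ)`. -/
abbrev HZ (n : ℕ) : Type := lp (fun _ : ℤ × (Fin n → ℕ) => ℂ) 2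

/-- The standard orthonormal basis vectors `e_m ⊗ e_k` of `ℓ²(ℤ × ℕⁿ)`. -/
def ez {n : ℕ} (m : ℤ) (k : Fin n → ℕ) : HZ n := lp.single 2 (m, k) 1

/-- For an index `j` with `1 ≤ j+1 ≤ n` (so `w_{j+2} = γ^{⊗(n-1-j)} ⊗ α* ⊗ 1^{⊗j}`),
the (0-based) coordinate `n - 1 - j` at which the shift `α*` acts. -/
def shiftIdx {n : ℕ} (j : Fin n) : Fin n := ⟨n - 1 - (j : ℕ), by have := j.isLt; omega⟩

/-- `IsVFamily q v` says that `v 0, …, v n` are the operators `v_i = S ⊗ w_i`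
(`1 ≤ i ≤ n+1`) on `ℓ²(ℤ) ⊗ ℓ²(ℕⁿ)`, where `S` is the bilateral shift and
`w_1 e_k = q^{-(k_1+⋯+k_n)} e_k`,
`w_i e_k = q^{-(k_1+⋯+k_{n+1-i})} (1-q^{-2(k_{n+2-i}+1)})^{1/2} e_{k+δ_{n+2-i}}` for
`2 ≤ i ≤ n+1`.  The `v_i` are the images of the generators `u_{n+1,i}` of
`C(S_q^{2n+1})` under the faithful representation `(τ'_{n+1} ⊗ π_{n(n-1)⋯21})Δⁿ`. -/
def IsVFamily (q : ℝ) {n : ℕ} (v : Fin (n + 1) → (HZ n →L[ℂ] HZ n)) : Prop :=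
  (∀ (m : ℤ) (k : Fin n → ℕ),
    v 0 (ez m k) = (q ^ (-(∑ s, (k s : ℤ)))) • ez (m + 1) k) ∧
  (∀ (j : Fin n) (m : ℤ) (k : Fin n → ℕ),
    v j.succ (ez m k) =
      ((q ^ (-(∑ s ∈ Finset.univ.filter (fun s : Fin n => (s : ℕ) < n - 1 - (j : ℕ)), (k s : ℤ)))) *
          Real.sqrt (1 - q ^ (-2 * ((k (shiftIdx j) : ℤ) + 1)))) •
        ez (m + 1) (Function.update k (shiftIdx j) (k (shiftIdx j) + 1)))

/-- `A_n(q)`: the unital C*-subalgebra of bounded operators on `ℓ²(ℤ) ⊗ ℓ²(ℕⁿ)` generated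
by `v_1, …, v_{n+1}`; the concrete realization of the quantum sphere algebra
`C(S_q^{2n+1})`. -/
def sphereAlg {n : ℕ} (v : Fin (n + 1) → (HZ n →L[ℂ] HZ n)) :
    StarSubalgebra ℂ (HZ n →L[ℂ] HZ n) :=
  (StarAlgebra.adjoin ℂ (Set.range v)).topologicalClosure

theorem inner_ez {n : ℕ} (i : ℤ × (Fin n → ℕ)) (x : HZ n) :
    inner ℂ (lp.single 2 i (1:ℂ) : HZ n) x = x i := by
  rw [lp.inner_single_left]; simp

theorem adj_mul_apply {n : ℕ} (V : HZ n →L[ℂ] HZ n) (σ : ℤ × (Fin n → ℕ) → ℤ × (Fin n → ℕ))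
    (hσ : Function.Injective σ) (c : ℤ × (Fin n → ℕ) → ℝ)
    (hV : ∀ i, V (lp.single 2 i 1) = ((c i : ℝ) : ℂ) • (lp.single 2 (σ i) 1 : HZ n)) (i) :
    (star V * V) (lp.single 2 i 1) = ((c i ^ 2 : ℝ) : ℂ) • (lp.single 2 i 1 : HZ n) := by
  apply lp.ext
  funext l
  have h1 : ((star V * V) (lp.single 2 i 1 : HZ n)) l
      = inner ℂ (lp.single 2 l (1:ℂ) : HZ n) ((star V * V) (lp.single 2 i 1)) :=
    (inner_ez l _).symm
  rw [h1, mul_apply_eq_comp, ContinuousLinearMap.star_eq_adjoint,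
    ContinuousLinearMap.adjoint_inner_right, hV, hV]
  rw [inner_smul_left, inner_smul_right, inner_ez]
  by_cases h : l = i
  · subst h; simp [pow_two]
  · have h' : σ l ≠ σ i := fun e => h (hσ e)
    simp [lp.single_apply, Pi.single_apply, h, h']

theorem re_aux (d : ℝ) (z : ℂ) :
    (inner ℂ z (((d ^ 2 : ℝ) : ℂ) * z) : ℂ).re = d ^ 2 * ‖z‖ ^ 2 := by
  rw [← smul_eq_mul, inner_smul_right, inner_self_eq_norm_sq_to_K, Complex.re_ofReal_mul]
  congr 1
  norm_cast

theorem norm_le_of_weighted {n : ℕ} (T : HZ n →L[ℂ] HZ n)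
    (σ : ℤ × (Fin n → ℕ) → ℤ × (Fin n → ℕ))
    (hσ : Function.Injective σ) (d : ℤ × (Fin n → ℕ) → ℝ)
    (hT : ∀ i, T (lp.single 2 i 1) = ((d i : ℝ) : ℂ) • (lp.single 2 (σ i) 1 : HZ n)) (δ : ℝ) (hδ : 0 ≤ δ)
    (hd : ∀ i, |d i| ≤ δ) : ‖T‖ ≤ δ := by
  refine ContinuousLinearMap.opNorm_le_bound _ hδ fun x => ?_
  have key : ∀ i, ((star T * T) x) i = (d i ^ 2 : ℝ) * x i := by
    intro i
    rw [← inner_ez i ((star T * T) x), mul_apply_eq_comp,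
      ContinuousLinearMap.star_eq_adjoint, ← ContinuousLinearMap.adjoint_adjoint T,
      ContinuousLinearMap.adjoint_adjoint (ContinuousLinearMap.adjoint T),
      ← ContinuousLinearMap.adjoint_inner_left, ← ContinuousLinearMap.adjoint_inner_left,
      ContinuousLinearMap.adjoint_adjoint, ContinuousLinearMap.adjoint_adjoint,
      ← mul_apply_eq_comp, ← ContinuousLinearMap.star_eq_adjoint,
      adj_mul_apply T σ hσ d hT, inner_smul_left, inner_ez]
    simp
  have h1 : (inner ℂ x ((star T * T) x) : ℂ) = ((‖T x‖ ^ 2 : ℝ) : ℂ) := by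
    rw [mul_apply_eq_comp, ContinuousLinearMap.star_eq_adjoint,
      ContinuousLinearMap.adjoint_inner_right, inner_self_eq_norm_sq_to_K]
    norm_cast
  have h2 := lp.hasSum_inner (𝕜 := ℂ) x ((star T * T) x)
  rw [h1] at h2
  have h3 := Complex.hasSum_re h2
  have h4 : HasSum (fun i => ‖x i‖ ^ 2) (‖x‖ ^ 2) := by
    have := lp.hasSum_norm (p := 2) (by norm_num) x
    simpa using this
  have h5 := h4.mul_left (δ ^ 2)
  have h6 : ‖T x‖ ^ 2 ≤ δ ^ 2 * ‖x‖ ^ 2 := by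
    have := hasSum_le (f := fun i => (inner ℂ (x i) (((star T * T) x) i) : ℂ).re) ?_ h3 h5
    · rwa [Complex.ofReal_re] at this
    intro i
    have e : (inner ℂ (x i) (((star T * T) x) i) : ℂ).re = d i ^ 2 * ‖x i‖ ^ 2 := by
      rw [key]
      exact re_aux _ _
    rw [e]
    have : d i ^ 2 ≤ δ ^ 2 := sq_le_sq' (abs_le.mp (hd i)).1 (abs_le.mp (hd i)).2
    gcongr
  rw [← mul_pow] at h6
  exact le_of_sq_le_sq h6 (by positivity)

theorem core {n : ℕ} {K : Type*} [TopologicalSpace K] [CompactSpace K]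
    (A : StarSubalgebra ℂ (HZ n →L[ℂ] HZ n)) (hA : IsClosed (A : Set (HZ n →L[ℂ] HZ n)))
    (x : ℤ × (Fin n → ℕ) → K) (G : Set C(K, ℝ))
    (hG : (Algebra.adjoin ℝ G).SeparatesPoints)
    (hGA : ∀ g ∈ G, ∃ T ∈ A, ∀ i, T (lp.single 2 i 1) = ((g (x i) : ℝ) : ℂ) • (lp.single 2 i 1 : HZ n))
    (V V' : HZ n →L[ℂ] HZ n) (hVA : V ∈ A) (σ : ℤ × (Fin n → ℕ) → ℤ × (Fin n → ℕ))
    (hσ : Function.Injective σ) (C C' : C(K, ℝ))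
    (hV : ∀ i, V (lp.single 2 i 1) = ((C (x i) : ℝ) : ℂ) • (lp.single 2 (σ i) 1 : HZ n))
    (hV' : ∀ i, V' (lp.single 2 i 1) = ((C' (x i) : ℝ) : ℂ) • (lp.single 2 (σ i) 1 : HZ n))
    (h0 : ∀ i, 0 ≤ C (x i)) (h1 : ∀ i, C (x i) ≤ 1) (h0' : ∀ i, 0 ≤ C' (x i))
    (hκ : ∀ δ > 0, ∃ κ > 0, ∀ i, C (x i) < κ → C' (x i) ≤ δ) : V' ∈ A := by
  have hP : ∀ P ∈ Algebra.adjoin ℝ G, ∃ T ∈ A, ∀ i,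
      T (lp.single 2 i 1) = ((P (x i) : ℝ) : ℂ) • (lp.single 2 i 1 : HZ n) := by
    intro P hP
    induction hP using Algebra.adjoin_induction with
    | mem g hg => exact hGA g hg
    | algebraMap r =>
      refine ⟨algebraMap ℂ _ (r : ℂ), A.algebraMap_mem _, fun i => ?_⟩
      rw [Algebra.algebraMap_eq_smul_one, smul_apply, one_apply_eq_self]
      rfl
    | add f g _ _ hf hg =>
      obtain ⟨S, hS, hS'⟩ := hf
      obtain ⟨T, hT, hT'⟩ := hg
      refine ⟨S + T, add_mem hS hT, fun i => ?_⟩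
      rw [add_apply, hS', hT', ContinuousMap.add_apply, Complex.ofReal_add, add_smul]
    | mul f g _ _ hf hg =>
      obtain ⟨S, hS, hS'⟩ := hf
      obtain ⟨T, hT, hT'⟩ := hg
      refine ⟨S * T, mul_mem hS hT, fun i => ?_⟩
      rw [mul_apply_eq_comp, hT', map_smul, hS',
        ContinuousMap.mul_apply, smul_smul, Complex.ofReal_mul, mul_comm]
  have : V' ∈ closure (A : Set (HZ n →L[ℂ] HZ n)) := by
    rw [Metric.mem_closure_iff]
    intro ε hε
    obtain ⟨κ, hκ0, hκ⟩ := hκ (ε / 3) (by positivity)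
    let F : C(K, ℝ) := ⟨fun y => C' y / max (C y) κ, by
      refine Continuous.div (by fun_prop) (by fun_prop) fun y => ?_
      have : κ ≤ max (C y) κ := le_max_right _ _
      linarith⟩
    have hF : F ∈ (Algebra.adjoin ℝ G).topologicalClosure := by
      rw [ContinuousMap.subalgebra_topologicalClosure_eq_top_of_separatesPoints _ hG]
      trivial
    have hF' : F ∈ closure (Algebra.adjoin ℝ G : Set C(K, ℝ)) := hF
    rw [Metric.mem_closure_iff] at hF'
    obtain ⟨P, hPm, hPF⟩ := hF' (ε / 3) (by positivity)
    obtain ⟨T, hT, hT'⟩ := hP P hPm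
    refine ⟨V * T, mul_mem hVA hT, ?_⟩
    rw [dist_eq_norm]
    refine lt_of_le_of_lt (norm_le_of_weighted (V' - V * T) σ hσ
      (fun i => C' (x i) - C (x i) * P (x i)) ?_ (ε / 3 + ε / 3) (by positivity) ?_) (by linarith)
    · intro i
      rw [sub_apply, mul_apply_eq_comp, hT', 
        map_smul, hV, hV', smul_smul, Complex.ofReal_sub, Complex.ofReal_mul, sub_smul, mul_comm (P (x i) : ℂ)]
    · intro i
      have e1 : |F (x i) - P (x i)| ≤ ε / 3 := by
        have := ContinuousMap.dist_apply_le_dist (f := F) (g := P) (x i)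
        rw [Real.dist_eq] at this
        linarith
      have e2 : |C' (x i) - C (x i) * F (x i)| ≤ ε / 3 := by
        change |C' (x i) - C (x i) * (C' (x i) / max (C (x i)) κ)| ≤ ε / 3
        by_cases h : C (x i) < κ
        · rw [max_eq_right h.le]
          have a1 : 0 ≤ C (x i) * (C' (x i) / κ) :=
            mul_nonneg (h0 i) (div_nonneg (h0' i) hκ0.le)
          have a2 : C (x i) * (C' (x i) / κ) ≤ C' (x i) := by
            rw [← mul_div_assoc, div_le_iff₀ hκ0, mul_comm]
            exact mul_le_mul_of_nonneg_left h.le (h0' i)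
          rw [abs_of_nonneg (by linarith)]
          linarith [hκ i h]
        · push Not at h
          rw [max_eq_left h, mul_div_cancel₀ _ (by linarith), sub_self, abs_zero]
          positivity
      have e3 : C' (x i) - C (x i) * P (x i) = (C' (x i) - C (x i) * F (x i))
          + C (x i) * (F (x i) - P (x i)) := by ring
      rw [e3]
      refine (abs_add_le _ _).trans (add_le_add e2 ?_)
      rw [abs_mul, abs_of_nonneg (h0 i)]
      calc _ ≤ 1 * |F (x i) - P (x i)| := by gcongr; exact h1 i
        _ ≤ _ := by linarith
  rwa [hA.closure_eq] at this

/-- Partial sums of the multi-index. -/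
def psum {n : ℕ} (t : ℕ) (k : Fin n → ℕ) : ℕ :=
  ∑ s ∈ Finset.univ.filter (fun s : Fin n => (s : ℕ) < t), k s

theorem psum_succ {n : ℕ} (t : Fin n) (k : Fin n → ℕ) :
    psum ((t : ℕ) + 1) k = psum t k + k t := by
  unfold psum
  have : Finset.univ.filter (fun s : Fin n => (s : ℕ) < (t : ℕ) + 1)
      = insert t (Finset.univ.filter (fun s : Fin n => (s : ℕ) < (t : ℕ))) := by
    ext s
    simp only [Finset.mem_filter, Finset.mem_univ, true_and, Finset.mem_insert, Fin.ext_iff]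
    omega
  rw [this, Finset.sum_insert (by simp), add_comm]

theorem psum_full {n : ℕ} (k : Fin n → ℕ) : psum n k = ∑ s, k s := by
  unfold psum
  congr 1
  ext s; simp

/-- Eigenvalues. -/
def xq (q : ℝ) {n : ℕ} (t : ℕ) (k : Fin n → ℕ) : ℝ := ((q ^ 2)⁻¹) ^ psum t k

theorem xq_pos {q : ℝ} (hq : 1 < q) {n : ℕ} (t : ℕ) (k : Fin n → ℕ) : 0 < xq q t k := by
  unfold xq; positivity

theorem xq_le {q : ℝ} (hq : 1 < q) {n : ℕ} (t : ℕ) (k : Fin n → ℕ) : xq q t k ≤ 1 := by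
  unfold xq
  apply pow_le_one₀ (by positivity)
  apply inv_le_one_of_one_le₀
  nlinarith

theorem xq_succ (q : ℝ) {n : ℕ} (t : Fin n) (k : Fin n → ℕ) :
    xq q ((t : ℕ) + 1) k = xq q t k * ((q ^ 2)⁻¹) ^ k t := by
  unfold xq
  rw [psum_succ, pow_add]

theorem sqrt_aux {q : ℝ} (hq : 1 < q) {n : ℕ} (t : ℕ) (k : Fin n → ℕ) :
    (q ^ psum t k)⁻¹ = √(xq q t k) := by
  have : xq q t k = ((q ^ psum t k)⁻¹) ^ 2 := by
    unfold xq
    rw [inv_pow, inv_pow, ← pow_mul, ← pow_mul, mul_comm]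
  rw [this, Real.sqrt_sq (by positivity)]

theorem coef_zero {q : ℝ} (hq : 1 < q) {n : ℕ} (k : Fin n → ℕ) :
    q ^ (-(∑ s, (k s : ℤ))) = √(xq q n k) := by
  have e : (∑ s, (k s : ℤ)) = (psum n k : ℤ) := by rw [psum_full]; push_cast; rfl
  rw [e, zpow_neg, zpow_natCast, sqrt_aux hq]

theorem coef_succ {q : ℝ} (hq : 1 < q) {n : ℕ} (j : Fin n) (k : Fin n → ℕ) :
    ((q ^ (-(∑ s ∈ Finset.univ.filter (fun s : Fin n => (s : ℕ) < n - 1 - (j : ℕ)), (k s : ℤ)))) *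
          Real.sqrt (1 - q ^ (-2 * ((k (shiftIdx j) : ℤ) + 1))))
     = √(xq q (shiftIdx j) k - (q ^ 2)⁻¹ * xq q ((shiftIdx j : ℕ) + 1) k) := by
  have e : (∑ s ∈ Finset.univ.filter (fun s : Fin n => (s : ℕ) < n - 1 - (j : ℕ)), (k s : ℤ))
      = (psum (shiftIdx j) k : ℤ) := by
    unfold psum shiftIdx; push_cast; rfl
  have e2 : q ^ (-2 * ((k (shiftIdx j) : ℤ) + 1)) = (q ^ 2)⁻¹ ^ (k (shiftIdx j) + 1) := by
    have : (q ^ 2)⁻¹ = q ^ (-2 : ℤ) := by rw [zpow_neg]; norm_cast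
    rw [this, zpow_mul]
    norm_cast
  rw [e, e2, xq_succ]
  have e3 : xq q (shiftIdx j) k - (q ^ 2)⁻¹ * (xq q (shiftIdx j) k * (q ^ 2)⁻¹ ^ k (shiftIdx j))
     = xq q (shiftIdx j) k * (1 - (q ^ 2)⁻¹ ^ (k (shiftIdx j) + 1)) := by ring
  rw [e3, Real.sqrt_mul (xq_pos hq _ _).le]
  congr 1
  rw [zpow_neg, zpow_natCast, sqrt_aux hq]

theorem xq_rpow {q q' : ℝ} (hq : 1 < q) (hq' : 1 < q') {n : ℕ} (t : ℕ) (k : Fin n → ℕ) :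
    xq q' t k = xq q t k ^ (Real.log q' / Real.log q) := by
  have hl := Real.log_pos hq
  have h : q' = q ^ (Real.log q' / Real.log q) := by
    rw [Real.rpow_def_of_pos (by linarith), mul_div_cancel₀ _ hl.ne', Real.exp_log (by linarith)]
  have hq0 : 0 ≤ q := by linarith
  generalize Real.log q' / Real.log q = a at *
  subst h
  unfold xq
  rw [← Real.rpow_natCast, ← Real.rpow_natCast, ← Real.rpow_natCast, ← Real.rpow_natCast,
    ← Real.rpow_neg (by positivity), ← Real.rpow_neg (by positivity)]
  simp only [← Real.rpow_mul hq0]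
  congr 1; ring

theorem rs {n : ℕ} (r : ℝ) (x : HZ n) : r • x = (r : ℂ) • x := by
  apply lp.ext
  funext l
  change r • (x l : ℂ) = (r : ℂ) • (x l : ℂ)
  exact (Complex.coe_smul r (x l : ℂ)).symm

/-- Shift of the basis index for `v 0`. -/
def sig0 {n : ℕ} (i : ℤ × (Fin n → ℕ)) : ℤ × (Fin n → ℕ) := (i.1 + 1, i.2)

/-- Shift of the basis index for `v j.succ`. -/
def sigS {n : ℕ} (t : Fin n) (i : ℤ × (Fin n → ℕ)) : ℤ × (Fin n → ℕ) :=
  (i.1 + 1, Function.update i.2 t (i.2 t + 1))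

theorem sig0_inj {n : ℕ} : Function.Injective (sig0 (n := n)) := by
  rintro ⟨a, b⟩ ⟨c, d⟩ h
  simpa [sig0] using h

theorem sigS_inj {n : ℕ} (t : Fin n) : Function.Injective (sigS t) := by
  rintro ⟨a, b⟩ ⟨c, d⟩ h
  simp only [sigS, Prod.mk.injEq, add_left_inj] at h
  obtain ⟨h1, h2⟩ := h
  refine Prod.ext h1 (funext fun s => ?_)
  have h3 := congrFun h2 s
  by_cases hs : s = t
  · subst hs; simpa using h3
  · simpa [hs] using h3

theorem v_zero {q : ℝ} (hq : 1 < q) {n : ℕ} {v : Fin (n + 1) → (HZ n →L[ℂ] HZ n)}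
    (hv : IsVFamily q v) (i) : v 0 (lp.single 2 i 1) =
      ((√(xq q n i.2) : ℝ) : ℂ) • (lp.single 2 (sig0 i) 1 : HZ n) := by
  have := hv.1 i.1 i.2
  rw [coef_zero hq, rs] at this
  exact this

theorem v_succ {q : ℝ} (hq : 1 < q) {n : ℕ} {v : Fin (n + 1) → (HZ n →L[ℂ] HZ n)}
    (hv : IsVFamily q v) (j : Fin n) (i) : v j.succ (lp.single 2 i 1) =
      ((√(xq q (shiftIdx j) i.2 - (q ^ 2)⁻¹ * xq q ((shiftIdx j : ℕ) + 1) i.2) : ℝ) : ℂ) •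
        (lp.single 2 (sigS (shiftIdx j) i) 1 : HZ n) := by
  have := hv.2 j i.1 i.2
  rw [coef_succ hq, rs] at this
  exact this

theorem q_inv_lt {q : ℝ} (hq : 1 < q) : (q ^ 2)⁻¹ < 1 := by
  apply inv_lt_one_of_one_lt₀; nlinarith

theorem xq_succ_le {q : ℝ} (hq : 1 < q) {n : ℕ} (t : Fin n) (k : Fin n → ℕ) :
    xq q ((t : ℕ) + 1) k ≤ xq q t k := by
  rw [xq_succ]
  apply mul_le_of_le_one_right (xq_pos hq _ _).le
  exact pow_le_one₀ (by positivity) (q_inv_lt hq).le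

theorem xq_diff {q : ℝ} (hq : 1 < q) {n : ℕ} (t : Fin n) (k : Fin n → ℕ) :
    (1 - (q ^ 2)⁻¹) * xq q t k ≤ xq q t k - (q ^ 2)⁻¹ * xq q ((t : ℕ) + 1) k := by
  have h1 := xq_succ_le hq t k
  have h2 : 0 ≤ (q ^ 2)⁻¹ := by positivity
  nlinarith

theorem xmem {q : ℝ} (hq : 1 < q) {n : ℕ} {v : Fin (n + 1) → (HZ n →L[ℂ] HZ n)}
    (A : StarSubalgebra ℂ (HZ n →L[ℂ] HZ n)) (hvA : ∀ i, v i ∈ A)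
    (hv : IsVFamily q v) (d : ℕ) (t : ℕ) (ht : t + d = n) :
    ∃ T ∈ A, ∀ i, T (lp.single 2 i 1) = ((xq q t i.2 : ℝ) : ℂ) • (lp.single 2 i 1 : HZ n) := by
  induction d generalizing t with
  | zero =>
    obtain rfl : t = n := by omega
    refine ⟨star (v 0) * v 0, mul_mem (star_mem (hvA 0)) (hvA 0), fun i => ?_⟩
    rw [adj_mul_apply (v 0) sig0 sig0_inj _ (v_zero hq hv), Real.sq_sqrt (xq_pos hq _ _).le]
  | succ d ih =>
    obtain ⟨T, hT, hT'⟩ := ih (t + 1) (by omega)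
    have hj : n - 1 - t < n := by omega
    let j : Fin n := ⟨n - 1 - t, hj⟩
    have hjt : (shiftIdx j : ℕ) = t := by
      change n - 1 - (n - 1 - t) = t
      omega
    refine ⟨star (v j.succ) * v j.succ + (((q ^ 2)⁻¹ : ℝ) : ℂ) • T,
      add_mem (mul_mem (star_mem (hvA _)) (hvA _)) (A.smul_mem hT _), fun i => ?_⟩
    have hpos := xq_diff hq (shiftIdx j) i.2
    have h0 : 0 ≤ (1 - (q ^ 2)⁻¹) * xq q (shiftIdx j) i.2 :=
      mul_nonneg (by linarith [q_inv_lt hq]) (xq_pos hq _ _).le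
    rw [add_apply, adj_mul_apply (v j.succ) _ (sigS_inj _) _ (v_succ hq hv j),
      Real.sq_sqrt (h0.trans hpos), smul_apply, hT', smul_smul, ← add_smul, hjt]
    congr 1
    push_cast
    ring

theorem small_aux {a δ y : ℝ} (ha : 0 < a) (hδ : 0 < δ) (hy : 0 ≤ y) (h : y < (δ ^ 2) ^ (1 / a)) :
    √(y ^ a) ≤ δ := by
  apply Real.sqrt_le_iff.mpr ⟨hδ.le, ?_⟩
  calc y ^ a ≤ ((δ ^ 2) ^ (1 / a)) ^ a := Real.rpow_le_rpow hy h.le ha.le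
    _ = δ ^ 2 := by
      rw [← Real.rpow_mul (by positivity), one_div_mul_cancel ha.ne', Real.rpow_one]

theorem vmem {q q' : ℝ} (hq : 1 < q) (hq' : 1 < q') {n : ℕ}
    {v v' : Fin (n + 1) → (HZ n →L[ℂ] HZ n)}
    (A : StarSubalgebra ℂ (HZ n →L[ℂ] HZ n)) (hA : IsClosed (A : Set (HZ n →L[ℂ] HZ n)))
    (hvA : ∀ i, v i ∈ A)
    (hv : IsVFamily q v) (hv' : IsVFamily q' v') (i : Fin (n + 1)) : v' i ∈ A := by
  let a := Real.log q' / Real.log q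
  have ha : 0 < a := div_pos (Real.log_pos hq') (Real.log_pos hq)
  let K := Fin (n + 1) → Set.Icc (0 : ℝ) 1
  let x : ℤ × (Fin n → ℕ) → K := fun i t => ⟨xq q t i.2, (xq_pos hq _ _).le, xq_le hq _ _⟩
  let co : Fin (n + 1) → C(K, ℝ) := fun t => ⟨fun y => (y t : ℝ), by fun_prop⟩
  have hG : (Algebra.adjoin ℝ (Set.range co)).SeparatesPoints := by
    intro y z hyz
    obtain ⟨t, ht⟩ := Function.ne_iff.mp hyz
    refine ⟨co t, ⟨co t, Algebra.subset_adjoin ⟨t, rfl⟩, rfl⟩, ?_⟩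
    exact fun e => ht (Subtype.ext e)
  have hGA : ∀ g ∈ Set.range co, ∃ T ∈ A, ∀ i,
      T (lp.single 2 i 1) = ((g (x i) : ℝ) : ℂ) • (lp.single 2 i 1 : HZ n) := by
    rintro _ ⟨t, rfl⟩
    exact xmem hq A hvA hv (n - t) t (by have := t.isLt; omega)
  have hca : Continuous fun y : ℝ => y ^ a := Real.continuous_rpow_const ha.le
  refine Fin.cases ?_ (fun j => ?_) i
  · let C : C(K, ℝ) := ⟨fun y => √(y (Fin.last n)), by fun_prop⟩
    let C' : C(K, ℝ) := ⟨fun y => √((y (Fin.last n) : ℝ) ^ a),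
      Real.continuous_sqrt.comp (hca.comp (by fun_prop))⟩
    refine core A hA x _ hG hGA (v 0) (v' 0) (hvA 0) sig0 sig0_inj C C' (v_zero hq hv) ?_
      (fun i => Real.sqrt_nonneg _) (fun i => Real.sqrt_le_one.mpr (xq_le hq _ _))
      (fun i => Real.sqrt_nonneg _) ?_
    · intro i
      rw [v_zero hq' hv', xq_rpow hq hq']
      rfl
    · intro δ hδ
      refine ⟨√((δ ^ 2) ^ (1 / a)), Real.sqrt_pos.mpr (by positivity), fun i h => ?_⟩
      exact small_aux ha hδ (xq_pos hq _ _).le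
        ((Real.sqrt_lt_sqrt_iff (xq_pos hq _ _).le).mp h)
  · let t := shiftIdx j
    let C : C(K, ℝ) := ⟨fun y => √((y t.castSucc : ℝ) - (q ^ 2)⁻¹ * (y t.succ : ℝ)), by fun_prop⟩
    let C' : C(K, ℝ) := ⟨fun y => √((y t.castSucc : ℝ) ^ a - (q' ^ 2)⁻¹ * (y t.succ : ℝ) ^ a),
      Real.continuous_sqrt.comp (Continuous.sub (hca.comp (by fun_prop))
        (continuous_const.mul (hca.comp (by fun_prop))))⟩
    refine core A hA x _ hG hGA (v j.succ) (v' j.succ) (hvA _) _ (sigS_inj t) C C'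
      (v_succ hq hv j) ?_
      (fun i => Real.sqrt_nonneg _) (fun i => ?_)
      (fun i => Real.sqrt_nonneg _) ?_
    · intro i
      rw [v_succ hq' hv', xq_rpow hq hq', xq_rpow hq hq']
      rfl
    · apply Real.sqrt_le_one.mpr
      have h1 := xq_le hq t i.2
      have h2 : 0 ≤ (q ^ 2)⁻¹ * xq q ((t : ℕ) + 1) i.2 :=
        mul_nonneg (by positivity) (xq_pos hq _ _).le
      change xq q t i.2 - (q ^ 2)⁻¹ * xq q ((t : ℕ) + 1) i.2 ≤ 1
      linarith
    · intro δ hδ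
      have hκ : 0 < 1 - (q ^ 2)⁻¹ := by linarith [q_inv_lt hq]
      refine ⟨√((1 - (q ^ 2)⁻¹) * (δ ^ 2) ^ (1 / a)), Real.sqrt_pos.mpr (by positivity),
        fun i h => ?_⟩
      have hd := xq_diff hq t i.2
      have hx := xq_pos hq t i.2
      have hx2 := xq_pos hq ((t : ℕ) + 1) i.2
      have h' : xq q t i.2 - (q ^ 2)⁻¹ * xq q ((t : ℕ) + 1) i.2
          < (1 - (q ^ 2)⁻¹) * (δ ^ 2) ^ (1 / a) :=
        (Real.sqrt_lt_sqrt_iff ((mul_nonneg hκ.le hx.le).trans hd)).mp h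
      have h3 : xq q t i.2 < (δ ^ 2) ^ (1 / a) := lt_of_mul_lt_mul_left (hd.trans_lt h') hκ.le
      refine le_trans (Real.sqrt_le_sqrt ?_) (small_aux ha hδ hx.le h3)
      have : 0 ≤ (q' ^ 2)⁻¹ * (xq q ((t : ℕ) + 1) i.2) ^ a := by positivity
      change xq q t i.2 ^ a - (q' ^ 2)⁻¹ * (xq q ((t : ℕ) + 1) i.2) ^ a ≤ _
      linarith

theorem sphereAlg_le {q q' : ℝ} (hq : 1 < q) (hq' : 1 < q') {n : ℕ}
    {v v' : Fin (n + 1) → (HZ n →L[ℂ] HZ n)}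
    (hv : IsVFamily q v) (hv' : IsVFamily q' v') : sphereAlg v' ≤ sphereAlg v := by
  have hc : IsClosed (sphereAlg v : Set (HZ n →L[ℂ] HZ n)) :=
    StarSubalgebra.isClosed_topologicalClosure _
  apply StarSubalgebra.topologicalClosure_minimal _ hc
  rw [StarAlgebra.adjoin_le_iff]
  rintro _ ⟨i, rfl⟩
  refine vmem hq hq' _ hc (fun j => ?_) hv hv' i
  exact StarSubalgebra.le_topologicalClosure _ (StarAlgebra.subset_adjoin ℂ _ ⟨j, rfl⟩)

/-- For every integer `n ≥ 1` and all reals `q, q' > 1`, the concrete quantum sphere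
C*-algebras `A_n(q)` and `A_n(q')` are isomorphic as unital C*-algebras (both being
isomorphic to the groupoid C*-algebra `C*(𝔉_n)`); in particular `C(S_q^{2n+1})` is
independent of `q`. -/
theorem stmt_6 (n : ℕ) (hn : 1 ≤ n) (q q' : ℝ) (hq : 1 < q) (hq' : 1 < q')
    (v : Fin (n + 1) → (HZ n →L[ℂ] HZ n)) (v' : Fin (n + 1) → (HZ n →L[ℂ] HZ n))
    (hv : IsVFamily q v) (hv' : IsVFamily q' v') :
    Nonempty ((sphereAlg v) ≃⋆ₐ[ℂ] (sphereAlg v')) := by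
  have h : sphereAlg v = sphereAlg v' :=
    le_antisymm (sphereAlg_le hq' hq hv' hv) (sphereAlg_le hq hq' hv hv')
  rw [h]
  exact ⟨StarAlgEquiv.refl _ _⟩
end
end

section
/- Fix an integer n ≥ 1 and a real q > 1. For indices i = (i_1,…,i_n) ∈ ℕⁿ, j = (j_1,…,j_n) ∈ ℕⁿ, j_{n+1} ∈ ℤ, k = (k_1,…,k_n) ∈ ℕⁿ satisfying i_m k_m = 0 for all 1 ≤ m ≤ n, define the bounded operator p^{i,j,k} = (v_n*)^{i_n} ⋯ (v_1*)^{i_1} y_1^{j_1} ⋯ y_n^{j_n} Y v_1^{k_1} ⋯ v_n^{k_n} on ℓ²(ℤ) ⊗ H_n, where y_m = v_m v_m*, Y = v_{n+1}^{j_{n+1}} if j_{n+1} ≥ 0 and Y = (v_{n+1}*)^{−j_{n+1}} if j_{n+1} < 0. Then the family of all such operators p^{i,j,k}, indexed by the tuples (i, j, j_{n+1}, k) satisfying the above conditions, is linearly independent over ℂ. -/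
noncomputable section

/-- Index data for the monomials `p^{i,j,k}`: multi-indices `i, k ∈ ℕⁿ`, `j ∈ ℕⁿ`,
`j_{n+1} ∈ ℤ`, subject to `i_m k_m = 0` for `1 ≤ m ≤ n`.  The components of
`t = (i, j, j_{n+1}, k)` are `t.1.1 = i`, `t.1.2.1 = j`, `t.1.2.2.1 = j_{n+1}`,
`t.1.2.2.2 = k`. -/
def pIdx (n : ℕ) : Type :=
  {t : (Fin n → ℕ) × (Fin n → ℕ) × ℤ × (Fin n → ℕ) // ∀ m : Fin n, t.1 m * t.2.2.2 m = 0}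

/-- The monomial
`p^{i,j,k} = (v_n*)^{i_n} ⋯ (v_1*)^{i_1} y_1^{j_1} ⋯ y_n^{j_n} Y v_1^{k_1} ⋯ v_n^{k_n}`
where `y_m = v_m v_m*`, and `Y = v_{n+1}^{j_{n+1}}` if `j_{n+1} ≥ 0`,
`Y = (v_{n+1}*)^{-j_{n+1}}` if `j_{n+1} < 0`.  (Here `v_m = v ⟨m-1⟩` for `1 ≤ m ≤ n+1`.) -/
def pOp {n : ℕ} (v : Fin (n + 1) → (HZ n →L[ℂ] HZ n)) (t : pIdx n) :
    HZ n →L[ℂ] HZ n :=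
  (List.ofFn fun s : Fin n => (star (v s.rev.castSucc)) ^ (t.1.1 s.rev)).prod *
  (List.ofFn fun s : Fin n => (v s.castSucc * star (v s.castSucc)) ^ (t.1.2.1 s)).prod *
  (if 0 ≤ t.1.2.2.1 then (v (Fin.last n)) ^ (t.1.2.2.1.toNat)
    else (star (v (Fin.last n))) ^ ((-t.1.2.2.1).toNat)) *
  (List.ofFn fun s : Fin n => (v s.castSucc) ^ (t.1.2.2.2 s)).prod


open MvPolynomial in
/-- The eigenvalue polynomials of `y_s`. -/
def phiP (n : ℕ) (s : ℕ) : MvPolynomial (Fin n) ℂ :=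
  (∏ a : Fin n, if (a : ℕ) + s < n then X a else 1) *
    ∏ a : Fin n, if (a : ℕ) + s = n then (1 - X a) else 1

lemma phi_prod_aux (L : ℕ → ℂ) (n : ℕ) (hL : ∀ k, 1 ≤ k → L k ≠ 0) (r : ℕ) (hr : r < n) :
    (∏ a ∈ Finset.range (r + 1), if a = 0 then L n else L (n - a) / L (n - a + 1)) = L (n - r) := by
  induction r with
  | zero => simp
  | succ r ih =>
    rw [Finset.prod_range_succ, ih (by omega)]
    have h1 : n - (r + 1) + 1 = n - r := by omega
    have := hL (n - r) (by omega)
    simp only [Nat.add_eq_zero_iff, one_ne_zero, and_false, if_false, h1]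
    field_simp

open MvPolynomial in
lemma phi_surj (n : ℕ) (lam : Fin n → ℂ) (hlam : ∀ s, ∃ k : ℕ, lam s = (k : ℂ) + 1) :
    ∃ t : Fin n → ℂ, ∀ s : Fin n, eval t (phiP n s) = lam s := by
  classical
  choose f hf using hlam
  let l : ℕ → ℕ := fun s => if h : s < n then f ⟨s, h⟩ + 1 else 1
  let L : ℕ → ℂ := fun k => ((∑ s ∈ Finset.range k, l s : ℕ) : ℂ)
  have hl : ∀ s, 1 ≤ l s := by intro s; simp only [l]; split_ifs <;> omega
  have hL : ∀ k, 1 ≤ k → L k ≠ 0 := by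
    intro k hk
    simp only [L]
    rw [Nat.cast_ne_zero]
    have : l 0 ≤ ∑ s ∈ Finset.range k, l s :=
      Finset.single_le_sum (f := l) (fun _ _ => Nat.zero_le _) (by simp; omega)
    have := hl 0
    omega
  refine ⟨fun a => if (a : ℕ) = 0 then L n else L (n - a) / L (n - a + 1), fun s => ?_⟩
  have hs := s.isLt
  have hlam' : lam s = L (s + 1) - L s := by
    simp only [L, Finset.sum_range_succ, l, hf s, hs, dif_pos]
    push_cast
    ring
  have e1 : (∏ a : Fin n, if (a : ℕ) + s < n then
      (if (a : ℕ) = 0 then L n else L (n - a) / L (n - a + 1)) else 1) = L (s + 1) := by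
    rw [Fin.prod_univ_eq_prod_range (fun a : ℕ => if a + (s : ℕ) < n then
      (if a = 0 then L n else L (n - a) / L (n - a + 1)) else 1) n, ← Finset.prod_filter]
    have : Finset.filter (fun a => a + (s : ℕ) < n) (Finset.range n)
        = Finset.range ((n - 1 - s) + 1) := by
      ext a; simp; omega
    rw [this, phi_prod_aux L n hL _ (by omega)]
    congr 1; omega
  simp only [phiP, map_mul, map_prod]
  simp only [apply_ite (eval _), eval_X, map_one, map_sub]
  rw [e1, hlam']
  rcases Nat.eq_zero_or_pos (s : ℕ) with h0 | h0
  · rw [Finset.prod_eq_one]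
    · simp [h0, L]
    · intro a _
      rw [if_neg]; have := a.isLt; omega
  · rw [Finset.prod_eq_single (⟨n - s, by omega⟩ : Fin n)]
    · have h1 : n - (n - (s : ℕ)) = s := by omega
      have h2 : ¬ (n - (s : ℕ) = 0) := by omega
      have h3 : n - (s : ℕ) + s = n := by omega
      simp only [h1, h2, h3, if_true, if_false]
      have := hL (s + 1) (by omega)
      field_simp
    · intro b _ hb
      rw [if_neg]
      intro h
      apply hb
      ext
      simp; omega
    · simp

open MvPolynomial in
lemma eval_bind_aux {n : ℕ} (x : Fin n → ℂ) (f : Fin n → MvPolynomial (Fin n) ℂ)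
    (P : MvPolynomial (Fin n) ℂ) :
    eval x (bind₁ f P) = eval (fun s => eval x (f s)) P :=
  eval₂Hom_bind₁ _ _ _ _

open MvPolynomial in
lemma poly_zero (n : ℕ) (q : ℝ) (hq : 1 < q) (P : MvPolynomial (Fin n) ℂ) (N : ℤ)
    (h : ∀ z : Fin n → ℤ, (∀ a, N ≤ z a) →
      eval (fun s : Fin n => eval (fun a => (((q ^ (-2 * z a) : ℝ)) : ℂ)) (phiP n s)) P = 0) :
    P = 0 := by
  have hb : bind₁ (fun s : Fin n => phiP n s) P = 0 := by
    apply MvPolynomial.funext_set (fun _ => (fun k : ℤ => (((q ^ (-2 * k) : ℝ)) : ℂ)) '' Set.Ici N)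
    · intro i
      apply Set.Infinite.image _ (Set.Ici_infinite N)
      intro a _ b _ hab
      have hab : (q ^ (-2 * a) : ℝ) = q ^ (-2 * b) := Complex.ofReal_injective hab
      have := zpow_right_injective₀ (by linarith) hq.ne' hab
      omega
    · intro x hx
      have : ∀ a, ∃ k : ℤ, N ≤ k ∧ (((q ^ (-2 * k) : ℝ)) : ℂ) = x a := by
        intro a
        obtain ⟨k, hk, hk'⟩ := hx a (Set.mem_univ _)
        exact ⟨k, hk, hk'⟩
      choose z hz hzx using this
      have := h z hz
      simp only [hzx] at this
      rw [map_zero, ← this, eval_bind_aux]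
  apply MvPolynomial.funext_set (fun _ => Set.range (fun k : ℕ => (k : ℂ) + 1))
  · intro i
    apply Set.infinite_range_of_injective
    intro a b hab
    simpa using hab
  · intro x hx
    obtain ⟨t, ht⟩ := phi_surj n x (fun s => by
      obtain ⟨k, hk⟩ := hx s (Set.mem_univ _)
      exact ⟨k, hk.symm⟩)
    have := congrArg (eval t) hb
    rw [map_zero] at this ⊢
    rw [← this]
    have e : x = fun s : Fin n => eval t (phiP n s) := funext fun s => (ht s).symm
    rw [eval_bind_aux, ← e]

/-- Basis vectors indexed by integer multi-indices. -/
def eZ {n : ℕ} (m : ℤ) (x : Fin n → ℤ) : HZ n := ez m (fun a => (x a).toNat)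

/-- The shift of `v_s`. -/
def dl (n : ℕ) (s : ℕ) : Fin n → ℤ := fun a => if s + (a : ℕ) = n then 1 else 0

/-- The weight of `v_s`. -/
def wC (q : ℝ) (n : ℕ) (s : ℕ) (x : Fin n → ℤ) : ℝ :=
  q ^ (-(∑ a : Fin n, if (a : ℕ) + s < n then x a else 0)) *
    Real.sqrt (∏ a : Fin n, if (a : ℕ) + s = n then (1 - q ^ (-2 * (x a + 1))) else 1)

lemma wC_pos (q : ℝ) (hq : 1 < q) (n s : ℕ) (x : Fin n → ℤ) (hx : ∀ a, 0 ≤ x a) :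
    0 < wC q n s x := by
  unfold wC
  apply mul_pos
  · positivity
  · apply Real.sqrt_pos.mpr
    apply Finset.prod_pos
    intro a _
    split_ifs
    · have := hx a
      have : q ^ (-2 * (x a + 1)) < 1 := zpow_lt_one_of_neg₀ hq (by omega)
      linarith
    · norm_num

lemma v_apply {q : ℝ} {n : ℕ} {v : Fin (n + 1) → (HZ n →L[ℂ] HZ n)} (hv : IsVFamily q v)
    (s : Fin (n + 1)) (m : ℤ) (x : Fin n → ℤ) (hx : ∀ a, 0 ≤ x a) :
    v s (eZ m x) = ((wC q n s x : ℝ) : ℂ) • eZ (m + 1) (x + dl n s) := by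
  rw [Complex.coe_smul]
  have hc : ∀ a, (((x a).toNat : ℕ) : ℤ) = x a := fun a => Int.toNat_of_nonneg (hx a)
  refine Fin.cases ?_ (fun j => ?_) s
  · unfold eZ
    rw [hv.1]
    congr 1
    · unfold wC
      simp only [hc, Fin.val_zero, add_zero, Fin.is_lt, if_true]
      rw [Finset.prod_eq_one, Real.sqrt_one, mul_one]
      intro a _
      rw [if_neg]; have := a.isLt; omega
    · congr 1
      ext a
      have := a.isLt
      have h : ¬ ((0 : ℕ) + (a : ℕ) = n) := by omega
      simp only [dl, Pi.add_apply, Fin.val_zero, h, if_false, add_zero]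
  · unfold eZ
    rw [hv.2]
    have hj := j.isLt
    congr 1
    · unfold wC
      simp only [hc, Fin.val_succ]
      congr 2
      · congr 1
        rw [Finset.sum_filter]
        apply Finset.sum_congr rfl
        intro a _
        congr 1
        rw [eq_iff_iff]
        omega
      · rw [Finset.prod_eq_single (shiftIdx j)]
        · rw [if_pos]
          simp only [shiftIdx]; omega
        · intro b _ hb
          rw [if_neg]
          intro h
          apply hb
          ext
          simp only [shiftIdx]; omega
        · simp
    · congr 1
      ext a
      have ha := hx a
      simp only [Function.update_apply, dl, Pi.add_apply, Fin.val_succ]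
      by_cases h : a = shiftIdx j
      · subst h
        rw [if_pos rfl, if_pos (by simp only [shiftIdx]; omega)]
        omega
      · rw [if_neg h, if_neg, add_zero]
        intro h'
        apply h
        ext
        simp only [shiftIdx]; omega

lemma eZ_coord {n : ℕ} (m m' : ℤ) (x : Fin n → ℤ) (y : Fin n → ℕ) :
    (eZ m x : HZ n) (m', y) = if m' = m ∧ (fun a => (y a : ℤ)) = (fun a => ((x a).toNat : ℤ))
      then 1 else 0 := by
  have : ((m', y) = (m, fun a => (x a).toNat)) ↔
      (m' = m ∧ (fun a => (y a : ℤ)) = (fun a => ((x a).toNat : ℤ))) := by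
    rw [Prod.mk.injEq, funext_iff, funext_iff]
    simp only [Nat.cast_inj]
  unfold eZ ez
  rw [lp.single_apply, Pi.single_apply]
  simp only [this]

lemma coord_eq_inner {n : ℕ} (f : HZ n) (m : ℤ) (y : Fin n → ℕ) :
    f (m, y) = inner ℂ (eZ m (fun a => (y a : ℤ))) f := by
  unfold eZ ez
  simp only [Int.toNat_natCast]
  rw [lp.inner_single_left]
  simp

lemma star_v_apply {q : ℝ} {n : ℕ} {v : Fin (n + 1) → (HZ n →L[ℂ] HZ n)} (hv : IsVFamily q v)
    (s : Fin (n + 1)) (m : ℤ) (x : Fin n → ℤ) (hx : ∀ a, 1 ≤ x a) :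
    star (v s) (eZ m x) = ((wC q n s (x - dl n s) : ℝ) : ℂ) • eZ (m - 1) (x - dl n s) := by
  have hd : ∀ a, 0 ≤ dl n s a ∧ dl n s a ≤ 1 := by
    intro a; unfold dl; split_ifs <;> simp
  apply lp.ext
  funext ⟨m', y⟩
  rw [coord_eq_inner, ContinuousLinearMap.star_eq_adjoint, ContinuousLinearMap.adjoint_inner_right,
    v_apply hv _ _ _ (by simp), inner_smul_left, Complex.conj_ofReal]
  have h1 : ∀ a, ((x a).toNat : ℤ) = x a := fun a => Int.toNat_of_nonneg (by linarith [hx a])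
  have h2 : ∀ a, (((x - dl n s) a).toNat : ℤ) = x a - dl n s a :=
    fun a => Int.toNat_of_nonneg (by simp only [Pi.sub_apply]; linarith [hx a, (hd a).2])
  have h3 : inner ℂ (eZ (m' + 1) ((fun a => (y a : ℤ)) + dl n s)) (eZ m x)
      = if m' = m - 1 ∧ (fun a => (y a : ℤ)) = x - dl n s then (1 : ℂ) else 0 := by
    have h4 : (eZ (m' + 1) ((fun a => (y a : ℤ)) + dl n s) : HZ n)
        = eZ (m' + 1) (fun a => ((((y a : ℤ) + dl n s a).toNat : ℕ) : ℤ)) := by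
      unfold eZ; congr 1
    rw [h4, ← coord_eq_inner, eZ_coord]
    congr 1
    rw [eq_iff_iff]
    simp only [h1, funext_iff, Pi.sub_apply]
    apply and_congr
    · omega
    · apply forall_congr'
      intro a
      have := hd a
      omega
  rw [h3, lp.coeFn_smul, Pi.smul_apply, eZ_coord]
  have h5 : (fun a => (((x - dl n s) a).toNat : ℤ)) = x - dl n s := by
    funext a; rw [h2]; rfl
  rw [h5]
  by_cases h : m' = m - 1 ∧ (fun a => (y a : ℤ)) = x - dl n s
  · rw [if_pos h, h.2]; simp
  · rw [if_neg h]; simp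

lemma wC_sq (q : ℝ) (hq : 1 < q) (n s : ℕ) (x : Fin n → ℤ) (hx : ∀ a, 1 ≤ x a) :
    ((wC q n s (x - dl n s) : ℝ) : ℂ) * ((wC q n s (x - dl n s) : ℝ) : ℂ) =
      MvPolynomial.eval (fun a => (((q ^ (-2 * x a) : ℝ)) : ℂ)) (phiP n s) := by
  have hq0 : q ≠ 0 := by linarith
  have e1 : (∑ a : Fin n, if (a : ℕ) + s < n then (x - dl n s) a else 0)
      = ∑ a : Fin n, if (a : ℕ) + s < n then x a else 0 := by
    apply Finset.sum_congr rfl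
    intro a _
    split_ifs with h
    · simp only [Pi.sub_apply, dl]
      rw [if_neg (by omega), sub_zero]
    · rfl
  have e2 : (∏ a : Fin n, if (a : ℕ) + s = n then (1 - q ^ (-2 * ((x - dl n s) a + 1))) else 1)
      = ∏ a : Fin n, if (a : ℕ) + s = n then (1 - q ^ (-2 * x a)) else 1 := by
    apply Finset.prod_congr rfl
    intro a _
    split_ifs with h
    · simp only [Pi.sub_apply, dl]
      rw [if_pos (by omega), sub_add_cancel]
    · rfl
  have hnn : 0 ≤ ∏ a : Fin n, if (a : ℕ) + s = n then (1 - q ^ (-2 * x a)) else 1 := by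
    apply Finset.prod_nonneg
    intro a _
    split_ifs
    · have := hx a
      have : q ^ (-2 * x a) < 1 := zpow_lt_one_of_neg₀ hq (by omega)
      linarith
    · norm_num
  have e3 : q ^ (-(∑ a : Fin n, if (a : ℕ) + s < n then x a else 0)) *
      q ^ (-(∑ a : Fin n, if (a : ℕ) + s < n then x a else 0))
      = ∏ a : Fin n, if (a : ℕ) + s < n then q ^ (-2 * x a) else 1 := by
    rw [← zpow_add₀ hq0, ← two_mul, ← Finset.sum_neg_distrib, Finset.mul_sum]
    have : ∀ (S : Finset (Fin n)) (f : Fin n → ℤ), q ^ (∑ a ∈ S, f a) = ∏ a ∈ S, q ^ f a := by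
      classical
      intro S f
      induction S using Finset.induction_on with
      | empty => simp
      | insert a S ha ih => rw [Finset.sum_insert ha, Finset.prod_insert ha, zpow_add₀ hq0, ih]
    rw [this]
    apply Finset.prod_congr rfl
    intro a _
    split_ifs
    · congr 1; ring
    · simp
  unfold wC
  rw [e1, e2, ← Complex.ofReal_mul, mul_mul_mul_comm, Real.mul_self_sqrt hnn, e3]
  simp only [phiP, map_mul, map_prod]
  simp only [apply_ite (MvPolynomial.eval _), MvPolynomial.eval_X, map_one, map_sub]
  push_cast
  congr 1
  · apply Finset.prod_congr rfl
    intro a _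
    split_ifs <;> simp
  · apply Finset.prod_congr rfl
    intro a _
    split_ifs <;> simp

lemma y_apply {q : ℝ} (hq : 1 < q) {n : ℕ} {v : Fin (n + 1) → (HZ n →L[ℂ] HZ n)}
    (hv : IsVFamily q v)
    (s : Fin (n + 1)) (m : ℤ) (x : Fin n → ℤ) (hx : ∀ a, 1 ≤ x a) :
    (v s * star (v s)) (eZ m x) =
      MvPolynomial.eval (fun a => (((q ^ (-2 * x a) : ℝ)) : ℂ)) (phiP n s) • eZ m x := by
  have hd : ∀ a, 0 ≤ (x - dl n s) a := by
    intro a; simp only [Pi.sub_apply, dl]; have := hx a; split_ifs <;> omega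
  rw [mul_apply_eq_comp, star_v_apply hv s m x hx, map_smul, v_apply hv _ _ _ hd,
    smul_smul, wC_sq q hq n s x hx, sub_add_cancel, sub_add_cancel]

/-- Weighted shift of degree `(d, δ)`, with nonzero weights, far away from the boundary. -/
def Sh {n : ℕ} (T : HZ n →L[ℂ] HZ n) (d : ℤ) (δ : Fin n → ℤ) : Prop :=
  ∃ N : ℤ, ∀ (m : ℤ) (x : Fin n → ℤ), (∀ a, N ≤ x a) →
    ∃ c : ℂ, c ≠ 0 ∧ T (eZ m x) = c • eZ (m + d) (x + δ)

lemma Sh.one {n : ℕ} : Sh (1 : HZ n →L[ℂ] HZ n) 0 0 :=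
  ⟨0, fun m x _ => ⟨1, one_ne_zero, by simp⟩⟩

lemma exists_bound {n : ℕ} (δ : Fin n → ℤ) : ∃ M : ℤ, ∀ a, -M ≤ δ a :=
  ⟨∑ a, |δ a|, fun a => by
    have h1 : |δ a| ≤ ∑ a, |δ a| :=
      Finset.single_le_sum (f := fun a => |δ a|) (fun _ _ => abs_nonneg _) (Finset.mem_univ a)
    have := neg_abs_le (δ a)
    linarith⟩

lemma Sh.mul {n : ℕ} {T T' : HZ n →L[ℂ] HZ n} {d d' : ℤ} {δ δ' : Fin n → ℤ}
    (h : Sh T d δ) (h' : Sh T' d' δ') : Sh (T * T') (d + d') (δ + δ') := by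
  obtain ⟨N, h⟩ := h
  obtain ⟨N', h'⟩ := h'
  obtain ⟨M, hM⟩ := exists_bound δ'
  refine ⟨max N' (N + M), fun m x hx => ?_⟩
  obtain ⟨c', hc', e'⟩ := h' m x (fun a => le_trans (le_max_left _ _) (hx a))
  obtain ⟨c, hc, e⟩ := h (m + d') (x + δ') (fun a => by
    have h1 := le_trans (le_max_right _ _) (hx a)
    have := hM a
    simp only [Pi.add_apply]
    linarith)
  refine ⟨c' * c, mul_ne_zero hc' hc, ?_⟩
  rw [mul_apply_eq_comp, e', map_smul, e, smul_smul, add_assoc, add_assoc,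
    add_comm d', add_comm δ']

lemma Sh.pow {n : ℕ} {T : HZ n →L[ℂ] HZ n} {d : ℤ} {δ : Fin n → ℤ}
    (h : Sh T d δ) (k : ℕ) : Sh (T ^ k) (k • d) (k • δ) := by
  induction k with
  | zero => simpa using Sh.one
  | succ k ih =>
    rw [pow_succ, succ_nsmul, succ_nsmul]
    exact ih.mul h

lemma Sh.list {n r : ℕ} (T : Fin r → (HZ n →L[ℂ] HZ n)) (d : Fin r → ℤ) (δ : Fin r → Fin n → ℤ)
    (h : ∀ s, Sh (T s) (d s) (δ s)) : Sh (List.ofFn T).prod (∑ s, d s) (∑ s, δ s) := by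
  induction r with
  | zero => simpa using Sh.one
  | succ r ih =>
    rw [List.ofFn_succ, List.prod_cons, Fin.sum_univ_succ, Fin.sum_univ_succ]
    exact (h 0).mul (ih _ _ _ (fun s => h s.succ))

lemma Sh.v {q : ℝ} (hq : 1 < q) {n : ℕ} {v : Fin (n + 1) → (HZ n →L[ℂ] HZ n)}
    (hv : IsVFamily q v) (s : Fin (n + 1)) : Sh (v s) 1 (dl n s) :=
  ⟨0, fun m x hx => ⟨_, by exact_mod_cast (wC_pos q hq n s x hx).ne', v_apply hv s m x hx⟩⟩

lemma Sh.star_v {q : ℝ} (hq : 1 < q) {n : ℕ} {v : Fin (n + 1) → (HZ n →L[ℂ] HZ n)}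
    (hv : IsVFamily q v) (s : Fin (n + 1)) : Sh (star (v s)) (-1) (-dl n s) := by
  refine ⟨1, fun m x hx => ⟨_, ?_, star_v_apply hv s m x hx⟩⟩
  have hd : ∀ a, 0 ≤ (x - dl n s) a := by
    intro a; simp only [Pi.sub_apply, dl]; have := hx a; split_ifs <;> omega
  exact_mod_cast (wC_pos q hq n s _ hd).ne'

lemma diag_pow {n : ℕ} (T : HZ n →L[ℂ] HZ n) (f : HZ n) (μ : ℂ) (h : T f = μ • f) (k : ℕ) :
    (T ^ k) f = μ ^ k • f := by
  induction k with
  | zero => simp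
  | succ k ih => rw [pow_succ, mul_apply_eq_comp, h, map_smul, ih, smul_smul, pow_succ,
      mul_comm]

lemma diag_list {n r : ℕ} (T : Fin r → (HZ n →L[ℂ] HZ n)) (f : HZ n) (μ : Fin r → ℂ)
    (h : ∀ s, T s f = μ s • f) : (List.ofFn T).prod f = (∏ s, μ s) • f := by
  induction r with
  | zero => simp
  | succ r ih =>
    rw [List.ofFn_succ, List.prod_cons, Fin.prod_univ_succ, mul_apply_eq_comp,
      ih _ _ (fun s => h s.succ), map_smul, h, smul_smul, mul_comm]

/-- Left factor. -/
def mA {n : ℕ} (v : Fin (n + 1) → (HZ n →L[ℂ] HZ n)) (i : Fin n → ℕ) : HZ n →L[ℂ] HZ n :=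
  (List.ofFn fun s : Fin n => (star (v s.rev.castSucc)) ^ (i s.rev)).prod

/-- Diagonal factor. -/
def mD {n : ℕ} (v : Fin (n + 1) → (HZ n →L[ℂ] HZ n)) (j : Fin n → ℕ) : HZ n →L[ℂ] HZ n :=
  (List.ofFn fun s : Fin n => (v s.castSucc * star (v s.castSucc)) ^ (j s)).prod

/-- Right factor. -/
def mB {n : ℕ} (v : Fin (n + 1) → (HZ n →L[ℂ] HZ n)) (l : ℤ) (k : Fin n → ℕ) :
    HZ n →L[ℂ] HZ n :=
  (if 0 ≤ l then (v (Fin.last n)) ^ (l.toNat)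
    else (star (v (Fin.last n))) ^ ((-l).toNat)) *
  (List.ofFn fun s : Fin n => (v s.castSucc) ^ (k s)).prod

lemma mA_Sh {q : ℝ} (hq : 1 < q) {n : ℕ} {v : Fin (n + 1) → (HZ n →L[ℂ] HZ n)}
    (hv : IsVFamily q v) (i : Fin n → ℕ) :
    Sh (mA v i) (-∑ s, (i s : ℤ)) (-∑ s : Fin n, i s • dl n s) := by
  have := Sh.list (fun s : Fin n => (star (v s.rev.castSucc)) ^ (i s.rev)) _ _
    (fun s => (Sh.star_v hq hv s.rev.castSucc).pow (i s.rev))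
  have e1 : ∑ s : Fin n, i s.rev • (-1 : ℤ) = -∑ s, (i s : ℤ) := by
    have := Equiv.sum_comp Fin.revPerm (fun s : Fin n => i s • (-1 : ℤ))
    simpa using this
  have e2 : ∑ s : Fin n, i s.rev • (-dl n s.rev.castSucc) = -∑ s : Fin n, i s • dl n s := by
    have := Equiv.sum_comp Fin.revPerm (fun s : Fin n => i s • (-dl n s))
    simpa using this
  rw [e1, e2] at this
  exact this

lemma mB_Sh {q : ℝ} (hq : 1 < q) {n : ℕ} {v : Fin (n + 1) → (HZ n →L[ℂ] HZ n)}
    (hv : IsVFamily q v) (l : ℤ) (k : Fin n → ℕ) :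
    Sh (mB v l k) (l + ∑ s, (k s : ℤ)) (l • dl n n + ∑ s : Fin n, k s • dl n s) := by
  apply Sh.mul
  · split_ifs with h
    · have := (Sh.v hq hv (Fin.last n)).pow l.toNat
      rw [← natCast_zsmul, ← natCast_zsmul, Int.toNat_of_nonneg h] at this
      simpa using this
    · have := (Sh.star_v hq hv (Fin.last n)).pow (-l).toNat
      rw [← natCast_zsmul, ← natCast_zsmul, Int.toNat_of_nonneg (by omega)] at this
      simpa using this
  · have := Sh.list (fun s : Fin n => (v s.castSucc) ^ (k s)) _ _
      (fun s => (Sh.v hq hv s.castSucc).pow (k s))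
    simpa using this

lemma sum_dl_apply {n : ℕ} (k : Fin n → ℕ) (a : Fin n) :
    (∑ s : Fin n, k s • dl n s) a =
      if h : 0 < (a : ℕ) then (k ⟨n - a, by omega⟩ : ℤ) else 0 := by
  rw [Finset.sum_apply]
  have ha := a.isLt
  split_ifs with h
  · rw [Finset.sum_eq_single (⟨n - a, by omega⟩ : Fin n)]
    · simp only [Pi.smul_apply, dl]
      rw [if_pos (by omega)]; simp
    · intro b _ hb
      simp only [Pi.smul_apply, dl]
      rw [if_neg]
      · simp
      · intro h'
        apply hb; ext; simp only; omega
    · simp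
  · apply Finset.sum_eq_zero
    intro b _
    have := b.isLt
    simp only [Pi.smul_apply, dl]
    rw [if_neg (by omega)]; simp

/-- Degree of a monomial. -/
def degd {n : ℕ} (i : Fin n → ℕ) (l : ℤ) (k : Fin n → ℕ) : ℤ :=
  (l + ∑ s, (k s : ℤ)) + (-∑ s, (i s : ℤ))

/-- Multi-degree of a monomial. -/
def degD {n : ℕ} (i : Fin n → ℕ) (l : ℤ) (k : Fin n → ℕ) : Fin n → ℤ :=
  (l • dl n n + ∑ s : Fin n, k s • dl n s) + (-∑ s : Fin n, i s • dl n s)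

lemma deg_inj {n : ℕ} (hn : 1 ≤ n) {i k i' k' : Fin n → ℕ} {l l' : ℤ}
    (h : ∀ m, i m * k m = 0) (h' : ∀ m, i' m * k' m = 0)
    (hd : degd i l k = degd i' l' k') (hD : degD i l k = degD i' l' k') :
    i = i' ∧ l = l' ∧ k = k' := by
  have hl : l = l' := by
    have := congrFun hD ⟨0, by omega⟩
    simp only [degD, Pi.add_apply, Pi.neg_apply, sum_dl_apply, Pi.smul_apply, dl] at this
    simpa using this
  subst hl
  have h1 : ∀ s : Fin n, 0 < (s : ℕ) → (k s : ℤ) - i s = k' s - i' s := by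
    intro s hs
    have hs' := s.isLt
    have := congrFun hD ⟨n - s, by omega⟩
    simp only [degD, Pi.add_apply, Pi.neg_apply, sum_dl_apply, Pi.smul_apply, dl] at this
    rw [if_neg (by omega)] at this
    have e : n - (n - (s : ℕ)) = s := by omega
    simp only [e, Fin.eta] at this
    rw [dif_pos (by omega), dif_pos (by omega), dif_pos (by omega), dif_pos (by omega)] at this
    linarith
  have h2 : ∑ s, ((k s : ℤ) - i s) = ∑ s, ((k' s : ℤ) - i' s) := by
    simp only [degd] at hd
    rw [Finset.sum_sub_distrib, Finset.sum_sub_distrib]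
    linarith
  have h3 : ∀ s : Fin n, (k s : ℤ) - i s = k' s - i' s := by
    intro s
    rcases Nat.eq_zero_or_pos (s : ℕ) with h0 | h0
    · rw [← Finset.add_sum_erase _ _ (Finset.mem_univ s),
        ← Finset.add_sum_erase _ _ (Finset.mem_univ s)] at h2
      rw [Finset.sum_congr rfl (g := fun s => ((k' s : ℤ) - i' s))] at h2
      · linarith
      · intro b hb
        apply h1
        have := Finset.ne_of_mem_erase hb
        rw [Ne, Fin.ext_iff] at this
        omega
    · exact h1 s h0
  have h4 : ∀ s : Fin n, i s = i' s ∧ k s = k' s := by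
    intro s
    have a := h3 s
    rcases Nat.mul_eq_zero.mp (h s) with b | b <;> rcases Nat.mul_eq_zero.mp (h' s) with c | c <;>
      omega
  exact ⟨funext fun s => (h4 s).1, rfl, funext fun s => (h4 s).2⟩

lemma mD_apply {q : ℝ} (hq : 1 < q) {n : ℕ} {v : Fin (n + 1) → (HZ n →L[ℂ] HZ n)}
    (hv : IsVFamily q v) (j : Fin n → ℕ) (m : ℤ) (x : Fin n → ℤ) (hx : ∀ a, 1 ≤ x a) :
    mD v j (eZ m x) =
      (∏ s : Fin n, MvPolynomial.eval (fun a => (((q ^ (-2 * x a) : ℝ)) : ℂ)) (phiP n s) ^ j s) •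
        eZ m x :=
  diag_list _ _ _ (fun s => diag_pow _ _ _ (y_apply hq hv s.castSucc m x hx) _)

/-- Eventual factorised form of the monomials. -/
lemma p_apply {q : ℝ} (hq : 1 < q) {n : ℕ} {v : Fin (n + 1) → (HZ n →L[ℂ] HZ n)}
    (hv : IsVFamily q v) (i : Fin n → ℕ) (l : ℤ) (k : Fin n → ℕ) :
    ∃ N : ℤ, ∀ x : Fin n → ℤ, (∀ a, N ≤ x a) → ∃ c : ℂ, c ≠ 0 ∧ ∀ j : Fin n → ℕ,
      (mA v i * mD v j * mB v l k) (eZ 0 x) =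
        (c * ∏ s : Fin n, MvPolynomial.eval (fun a => (((q ^ (-2 *
          (x + (l • dl n n + ∑ s : Fin n, k s • dl n s)) a) : ℝ)) : ℂ)) (phiP n s) ^ j s) •
        eZ (degd i l k) (x + degD i l k) := by
  obtain ⟨N, hA⟩ := mA_Sh hq hv i
  obtain ⟨N', hB⟩ := mB_Sh hq hv l k
  obtain ⟨M, hM⟩ := exists_bound (l • dl n n + ∑ s : Fin n, k s • dl n s)
  refine ⟨max N' (max (N + M) (1 + M)), fun x hx => ?_⟩
  have hx1 : ∀ a, N' ≤ x a := fun a => le_trans (le_max_left _ _) (hx a)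
  have hx2 : ∀ a, N + M ≤ x a :=
    fun a => le_trans (le_trans (le_max_left _ _) (le_max_right _ _)) (hx a)
  have hx3 : ∀ a, 1 + M ≤ x a :=
    fun a => le_trans (le_trans (le_max_right _ _) (le_max_right _ _)) (hx a)
  obtain ⟨b, hb, eb⟩ := hB 0 x hx1
  obtain ⟨c, hc, ec⟩ := hA (0 + (l + ∑ s, (k s : ℤ)))
    (x + (l • dl n n + ∑ s : Fin n, k s • dl n s)) (fun a => by
      have := hM a; have := hx2 a; rw [Pi.add_apply]; linarith)
  refine ⟨b * c, mul_ne_zero hb hc, fun j => ?_⟩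
  rw [mul_apply_eq_comp, mul_apply_eq_comp, eb, map_smul, map_smul,
    mD_apply hq hv j _ _ (fun a => by
      have := hM a; have := hx3 a; rw [Pi.add_apply]; linarith), map_smul, ec, smul_smul, smul_smul,
      degd, degD, zero_add, add_assoc x]
  congr 1
  ring

/-- Fix `n ≥ 1` and `q > 1`.  The family of all monomials
`p^{i,j,k} = (v_n*)^{i_n} ⋯ (v_1*)^{i_1} y_1^{j_1} ⋯ y_n^{j_n} Y v_1^{k_1} ⋯ v_n^{k_n}`
(with `y_m = v_m v_m*`, `Y` a power of `v_{n+1}` or of `v_{n+1}*` according to the sign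
of `j_{n+1}`, and `i_m k_m = 0` for all `m`) is linearly independent over `ℂ`. -/
theorem stmt_7 (n : ℕ) (hn : 1 ≤ n) (q : ℝ) (hq : 1 < q)
    (v : Fin (n + 1) → (HZ n →L[ℂ] HZ n)) (hv : IsVFamily q v) :
    LinearIndependent ℂ (pOp v) := by
  classical
  rw [linearIndependent_iff']
  intro F g hg t0 ht0
  have hp : ∀ t : pIdx n, pOp v t = mA v t.1.1 * mD v t.1.2.1 * mB v t.1.2.2.1 t.1.2.2.2 := by
    intro t
    simp only [pOp, mA, mD, mB, mul_assoc]
  choose N hN using fun t : pIdx n => p_apply hq hv t.1.1 t.1.2.2.1 t.1.2.2.2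
  choose M hM using fun t : pIdx n => exists_bound (degD t.1.1 t.1.2.2.1 t.1.2.2.2)
  obtain ⟨N0, hN0⟩ : ∃ N0 : ℤ, ∀ t ∈ F, N t ≤ N0 ∧ M t ≤ N0 := by
    refine ⟨∑ t ∈ F, (|N t| + |M t|), fun t ht => ?_⟩
    have h1 : |N t| + |M t| ≤ ∑ t ∈ F, (|N t| + |M t|) :=
      Finset.single_le_sum (f := fun t => |N t| + |M t|) (fun _ _ => by positivity) ht
    have := le_abs_self (N t)
    have := le_abs_self (M t)
    have := abs_nonneg (N t)
    have := abs_nonneg (M t)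
    constructor <;> linarith
  let cls : pIdx n → (Fin n → ℕ) × ℤ × (Fin n → ℕ) := fun t => (t.1.1, t.1.2.2.1, t.1.2.2.2)
  let P : MvPolynomial (Fin n) ℂ := ∑ t ∈ F, if cls t = cls t0 then
    MvPolynomial.monomial (Finsupp.equivFunOnFinite.symm t.1.2.1) (g t) else 0
  set β : Fin n → ℤ := t0.1.2.2.1 • dl n n + ∑ s : Fin n, t0.1.2.2.2 s • dl n s with hβ
  have hP : P = 0 := by
    obtain ⟨M', hM'⟩ := exists_bound (-β)
    apply poly_zero n q hq P (N0 + M')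
    intro z hz
    have hx : ∀ a, N0 ≤ (z - β) a := by
      intro a
      have := hz a
      have := hM' a
      simp only [Pi.neg_apply, Pi.sub_apply] at this ⊢
      linarith
    obtain ⟨c, hc, e⟩ := hN t0 (z - β) (fun a => (hN0 t0 ht0).1.trans (hx a))
    rw [← hβ, sub_add_cancel] at e
    have hnn : ∀ t ∈ F, ∀ a, 0 ≤ ((z - β) + degD t.1.1 t.1.2.2.1 t.1.2.2.2) a := by
      intro t ht a
      have := hM t a
      have := (hN0 t ht).2
      have := hx a
      rw [Pi.add_apply]
      linarith
    have h0 := congrArg (fun T : HZ n →L[ℂ] HZ n => (T (eZ 0 (z - β)))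
      (degd t0.1.1 t0.1.2.2.1 t0.1.2.2.2,
        fun a => (((z - β) + degD t0.1.1 t0.1.2.2.1 t0.1.2.2.2) a).toNat)) hg
    simp only [ContinuousLinearMap.sum_apply, ContinuousLinearMap.zero_apply, lp.coeFn_sum,
      Finset.sum_apply, lp.coeFn_zero, Pi.zero_apply, ContinuousLinearMap.smul_apply,
      lp.coeFn_smul, Pi.smul_apply] at h0
    have key : c * MvPolynomial.eval (fun s : Fin n =>
        MvPolynomial.eval (fun a => (((q ^ (-2 * z a) : ℝ)) : ℂ)) (phiP n s)) P = 0 := by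
      rw [← h0, map_sum, Finset.mul_sum]
      apply Finset.sum_congr rfl
      intro t ht
      by_cases hcls : cls t = cls t0
      · rw [if_pos hcls, MvPolynomial.eval_monomial, Finsupp.prod_fintype _ _ (by simp), hp]
        simp only [cls, Prod.mk.injEq] at hcls
        obtain ⟨a1, a2, a3⟩ := hcls
        rw [a1, a2, a3, e, lp.coeFn_smul, Pi.smul_apply, eZ_coord, if_pos ⟨rfl, rfl⟩]
        simp only [smul_eq_mul, Finsupp.equivFunOnFinite_symm_apply_apply]
        ring
      · rw [if_neg hcls, map_zero, mul_zero, hp]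
        obtain ⟨c', _, e'⟩ := hN t (z - β) (fun a => (hN0 t ht).1.trans (hx a))
        rw [e', lp.coeFn_smul, Pi.smul_apply, eZ_coord, if_neg]
        · simp
        · rintro ⟨b1, b2⟩
          apply hcls
          have b3 : degD t0.1.1 t0.1.2.2.1 t0.1.2.2.2 = degD t.1.1 t.1.2.2.1 t.1.2.2.2 := by
            funext a
            have := congrFun b2 a
            simp only [Int.toNat_of_nonneg (hnn t ht a), Int.toNat_of_nonneg (hnn t0 ht0 a)] at this
            simpa using this
          obtain ⟨a1, a2, a3⟩ := deg_inj hn t0.2 t.2 b1 b3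
          simp only [cls, a1, a2, a3]
    exact (mul_eq_zero.mp key).resolve_left hc
  have hcoef := congrArg (MvPolynomial.coeff (Finsupp.equivFunOnFinite.symm t0.1.2.1)) hP
  rw [MvPolynomial.coeff_zero, MvPolynomial.coeff_sum, Finset.sum_eq_single t0] at hcoef
  · simpa using hcoef
  · intro t _ hne
    by_cases hcls : cls t = cls t0
    · rw [if_pos hcls, MvPolynomial.coeff_monomial, if_neg]
      intro hj
      have hj := Finsupp.equivFunOnFinite.symm.injective hj
      simp only [cls, Prod.mk.injEq] at hcls
      obtain ⟨a1, a2, a3⟩ := hcls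
      exact hne (Subtype.ext (Prod.ext a1 (Prod.ext hj (Prod.ext a2 a3))))
    · rw [if_neg hcls, MvPolynomial.coeff_zero]
  · intro h; exact absurd ht0 h
end
end
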